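/- arXiv:2603.28720 — 8 statements merged into one kernel-verified Lean document; each statement's English description precedes it below -/
import Mathlib

section
/- Let V be a complex vector space and let σ be a conjugate-linear map on V such that σ(σ(v)) = -v for all v ∈ V. Then there exists a module structure of the quaternions ℍ on the additive group of V such that: every real scalar r ∈ ℝ ⊆ ℍ acts by the given real scalar multiplication on V; the quaternion i acts as scalar multiplication by the complex number I; and the quaternion j acts as σ. (This is the paper's claim that a state space carrying an anti-unitary operator with T² = -1 is a representation of the algebra ℂ[ℤ₂ᵀ]^η = ℍ.) -/
open scoped Quaternion

/-- If `σ` is a conjugate-linear map on a complex vector space `V` with `σ (σ v) = -v`,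
then the additive group of `V` carries a module structure over the quaternions `ℍ`
(encoded as a ring homomorphism `ℍ →+* AddMonoid.End V`) in which every real scalar acts
by the given real scalar multiplication, the quaternion `i` acts as scalar multiplication
by the complex number `I`, and the quaternion `j` acts as `σ`. -/
theorem exists_quaternion_module_of_conjLinear
    (V : Type*) [AddCommGroup V] [Module ℂ V]
    (σ : V →ₛₗ[starRingEnd ℂ] V) (hσ : ∀ v, σ (σ v) = -v) :
    ∃ ρ : ℍ[ℝ] →+* AddMonoid.End V,
      (∀ (r : ℝ) (v : V), ρ (r : ℍ[ℝ]) v = r • v) ∧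
      (∀ v : V, ρ (⟨0, 1, 0, 0⟩ : ℍ[ℝ]) v = Complex.I • v) ∧
      (∀ v : V, ρ (⟨0, 0, 1, 0⟩ : ℍ[ℝ]) v = σ v) := by
  refine ⟨
    { toFun := fun q =>
        { toFun := fun v => (⟨q.re, q.imI⟩ : ℂ) • v + (⟨q.imJ, q.imK⟩ : ℂ) • σ v
          map_zero' := by simp
          map_add' := fun v w => by
            simp only [map_add, smul_add]
            abel }
      map_one' := ?_
      map_mul' := ?_
      map_zero' := ?_
      map_add' := ?_ }, ?_, ?_, ?_⟩
  · ext v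
    change (⟨1, 0⟩ : ℂ) • v + (⟨0, 0⟩ : ℂ) • σ v = v
    have h1 : (⟨1, 0⟩ : ℂ) = 1 := rfl
    have h0 : (⟨0, 0⟩ : ℂ) = 0 := rfl
    rw [h1, h0, one_smul, zero_smul, add_zero]
  · intro p q
    ext v
    change (⟨(p * q).re, (p * q).imI⟩ : ℂ) • v + (⟨(p * q).imJ, (p * q).imK⟩ : ℂ) • σ v =
      (⟨p.re, p.imI⟩ : ℂ) • ((⟨q.re, q.imI⟩ : ℂ) • v + (⟨q.imJ, q.imK⟩ : ℂ) • σ v) +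
      (⟨p.imJ, p.imK⟩ : ℂ) • σ ((⟨q.re, q.imI⟩ : ℂ) • v + (⟨q.imJ, q.imK⟩ : ℂ) • σ v)
    have e1 : (⟨(p * q).re, (p * q).imI⟩ : ℂ) = (⟨p.re, p.imI⟩ : ℂ) * ⟨q.re, q.imI⟩
        - ⟨p.imJ, p.imK⟩ * starRingEnd ℂ ⟨q.imJ, q.imK⟩ := by
      apply Complex.ext <;> simp <;> ring
    have e2 : (⟨(p * q).imJ, (p * q).imK⟩ : ℂ) = (⟨p.re, p.imI⟩ : ℂ) * ⟨q.imJ, q.imK⟩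
        + ⟨p.imJ, p.imK⟩ * starRingEnd ℂ ⟨q.re, q.imI⟩ := by
      apply Complex.ext <;> simp <;> ring
    rw [e1, e2, map_add, σ.map_smulₛₗ, σ.map_smulₛₗ, hσ]
    module
  · ext v
    change (⟨0, 0⟩ : ℂ) • v + (⟨0, 0⟩ : ℂ) • σ v = 0
    have h0 : (⟨0, 0⟩ : ℂ) = 0 := rfl
    rw [h0, zero_smul, zero_smul, add_zero]
  · intro p q
    ext v
    change (⟨p.re + q.re, p.imI + q.imI⟩ : ℂ) • v + (⟨p.imJ + q.imJ, p.imK + q.imK⟩ : ℂ) • σ v =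
      ((⟨p.re, p.imI⟩ : ℂ) • v + (⟨p.imJ, p.imK⟩ : ℂ) • σ v) +
      ((⟨q.re, q.imI⟩ : ℂ) • v + (⟨q.imJ, q.imK⟩ : ℂ) • σ v)
    have e (a b c d : ℝ) : (⟨a + c, b + d⟩ : ℂ) = ⟨a, b⟩ + ⟨c, d⟩ := rfl
    rw [e, e]
    module
  · intro r v
    change (r : ℂ) • v + (0 : ℂ) • σ v = r • v
    rw [zero_smul, add_zero, Complex.coe_smul]
  · intro v
    change Complex.I • v + (0 : ℂ) • σ v = Complex.I • v
    rw [zero_smul, add_zero]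
  · intro v
    change (0 : ℂ) • v + (1 : ℂ) • σ v = σ v
    rw [zero_smul, one_smul, zero_add]
end

section
/- Let T₀ be the conjugate-linear map on ℂ × ℂ given by T₀(z, w) = (-conj(w), conj(z)). The set C = {f : ℂ × ℂ →ₗ[ℂ] ℂ × ℂ | f ∘ T₀ = T₀ ∘ f} of ℂ-linear endomorphisms of ℂ × ℂ commuting with T₀ is an ℝ-subalgebra of the ℝ-algebra of ℂ-linear endomorphisms of ℂ × ℂ, and C is isomorphic as an ℝ-algebra to the quaternions ℍ. (This is the paper's computation that the endomorphism algebra of the boundary condition of the Haldane chain is the quaternion algebra, i.e., the category of boundary conditions is Vec_ℍ.) -/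
open scoped Quaternion

noncomputable section

/-- The conjugate-linear map `T₀` on `ℂ × ℂ` given by `T₀(z, w) = (-conj w, conj z)`. -/
def T0 : (ℂ × ℂ) →ₛₗ[starRingEnd ℂ] (ℂ × ℂ) where
  toFun p := (-(starRingEnd ℂ) p.2, (starRingEnd ℂ) p.1)
  map_add' := by
    intro a b
    simp [Prod.ext_iff]
    ring
  map_smul' := by
    intro c p
    simp [Prod.ext_iff, smul_eq_mul]

/-- The matrix `[[a, -conj c], [c, conj a]]` acting on `ℂ × ℂ`. -/
def quatEnd (a c : ℂ) : Module.End ℂ (ℂ × ℂ) where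
  toFun p := (a * p.1 - (starRingEnd ℂ) c * p.2, c * p.1 + (starRingEnd ℂ) a * p.2)
  map_add' := by
    intro p q
    ext1 <;> simp <;> ring
  map_smul' := by
    intro r p
    ext1 <;> simp <;> ring

theorem quatEnd_apply (a c : ℂ) (p : ℂ × ℂ) : quatEnd a c p =
    (a * p.1 - (starRingEnd ℂ) c * p.2, c * p.1 + (starRingEnd ℂ) a * p.2) := rfl

theorem T0_apply' (p : ℂ × ℂ) :
    T0 p = (-(starRingEnd ℂ) p.2, (starRingEnd ℂ) p.1) := rfl

/-- The quaternions acting on `ℂ × ℂ`. -/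
def quatHom : ℍ[ℝ] →ₐ[ℝ] Module.End ℂ (ℂ × ℂ) :=
  AlgHom.ofLinearMap
    { toFun := fun q => quatEnd ⟨q.re, q.imI⟩ ⟨q.imJ, -q.imK⟩
      map_add' := by
        intro x y
        refine LinearMap.ext fun p => ?_
        simp only [quatEnd_apply, LinearMap.add_apply]
        ext1 <;> apply Complex.ext <;> simp <;> ring
      map_smul' := by
        intro r x
        refine LinearMap.ext fun p => ?_
        simp only [quatEnd_apply, LinearMap.smul_apply]
        ext1 <;> apply Complex.ext <;> simp <;> ring }
    (by
      refine LinearMap.ext fun p => ?_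
      simp only [LinearMap.coe_mk, AddHom.coe_mk, quatEnd_apply, Module.End.one_apply]
      ext1 <;> apply Complex.ext <;> simp)
    (by
      intro x y
      refine LinearMap.ext fun p => ?_
      simp only [LinearMap.coe_mk, AddHom.coe_mk, quatEnd_apply, Module.End.mul_apply]
      ext1 <;> apply Complex.ext <;> simp <;> ring)

theorem quatHom_apply (q : ℍ[ℝ]) :
    quatHom q = quatEnd ⟨q.re, q.imI⟩ ⟨q.imJ, -q.imK⟩ := rfl

theorem quatHom_injective : Function.Injective quatHom := by
  intro x y h
  have h1 := congrArg (fun f => f ((1 : ℂ), (0 : ℂ))) h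
  simp only [quatHom_apply, quatEnd_apply] at h1
  simp [Complex.ext_iff] at h1
  obtain ⟨⟨h1, h2⟩, h3, h4⟩ := h1
  exact Quaternion.ext _ _ h1 h2 h3 h4

theorem quatHom_range : (quatHom.range : Set (Module.End ℂ (ℂ × ℂ))) =
    {f : Module.End ℂ (ℂ × ℂ) | ∀ p, f (T0 p) = T0 (f p)} := by
  ext f
  simp only [AlgHom.coe_range, Set.mem_range, Set.mem_setOf_eq]
  constructor
  · rintro ⟨q, rfl⟩ p
    simp only [quatHom_apply, quatEnd_apply, T0_apply']
    ext1 <;> apply Complex.ext <;> simp <;> ring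
  · intro h
    have h1 := h (1, 0)
    rw [T0_apply', T0_apply'] at h1
    simp only [map_zero, neg_zero, map_one] at h1
    refine ⟨⟨(f (1, 0)).1.re, (f (1, 0)).1.im, (f (1, 0)).2.re, -(f (1, 0)).2.im⟩, ?_⟩
    refine LinearMap.ext fun p => ?_
    have hp : p = p.1 • ((1 : ℂ), (0 : ℂ)) + p.2 • ((0 : ℂ), (1 : ℂ)) := by
      ext1 <;> simp
    have hf : f p = p.1 • f (1, 0) + p.2 • f (0, 1) := by
      conv_lhs => rw [hp]
      rw [map_add, map_smul, map_smul]
    rw [hf, h1]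
    change quatEnd ⟨(f (1, 0)).1.re, (f (1, 0)).1.im⟩ ⟨(f (1, 0)).2.re, -(-(f (1, 0)).2.im)⟩ p = _
    rw [quatEnd_apply]
    ext1 <;> apply Complex.ext <;> simp <;> ring

/-- The set of `ℂ`-linear endomorphisms of `ℂ × ℂ` commuting with `T₀` is an
`ℝ`-subalgebra of the `ℝ`-algebra of `ℂ`-linear endomorphisms of `ℂ × ℂ`, and this
subalgebra is isomorphic as an `ℝ`-algebra to the quaternions `ℍ`. -/
theorem commutant_of_T0_iso_quaternions :
    ∃ C : Subalgebra ℝ (Module.End ℂ (ℂ × ℂ)),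
      (↑C = {f : Module.End ℂ (ℂ × ℂ) | ∀ p, f (T0 p) = T0 (f p)}) ∧
      Nonempty (C ≃ₐ[ℝ] ℍ[ℝ]) := by
  exact ⟨quatHom.range, quatHom_range,
    ⟨(AlgEquiv.ofInjective quatHom quatHom_injective).symm⟩⟩

end
end

section
/- Let V be a nonzero finite-dimensional complex vector space and let τ be a conjugate-linear map on V such that applying τ four times is the identity. Assume the pair (V, τ) is irreducible: the only ℂ-linear subspaces W ⊆ V with τ(W) ⊆ W are 0 and V. Then one of the following holds: either there is a ℂ-linear isomorphism e : V ≅ ℂ with e(τ(v)) = conj(e(v)) for all v ∈ V, or there is a ℂ-linear isomorphism e : V ≅ ℂ × ℂ with e(τ(v)) = T₀(e(v)) for all v ∈ V. (Classification of irreducible representations of ℤ₄ᵀ: up to equivalence there are exactly the trivial representation and the two-dimensional quaternionic representation Q.) -/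
noncomputable section

theorem equiv_of_intertwining {V M : Type*} [AddCommGroup V] [Module ℂ V]
    [AddCommGroup M] [Module ℂ M]
    (τ : V →ₛₗ[starRingEnd ℂ] V)
    (hirr : ∀ W : Submodule ℂ V, (∀ v ∈ W, τ v ∈ W) → W = ⊥ ∨ W = ⊤)
    (S : M → M) (f : M →ₗ[ℂ] V) (hf : ∀ m, f m = 0 → m = 0) (m₀ : M) (h₀ : m₀ ≠ 0)
    (hS : ∀ m, τ (f m) = f (S m)) :
    ∃ e : V ≃ₗ[ℂ] M, ∀ v, e (τ v) = S (e v) := by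
  have hinj : Function.Injective f := (injective_iff_map_eq_zero f).2 hf
  have hr : LinearMap.range f = ⊤ := by
    rcases hirr (LinearMap.range f) (by
      rintro _ ⟨m, rfl⟩
      exact ⟨S m, (hS m).symm⟩) with h | h
    · exfalso
      apply h₀
      apply hf
      have : f m₀ ∈ LinearMap.range f := ⟨m₀, rfl⟩
      rw [h] at this
      simpa using this
    · exact h
  let g : M ≃ₗ[ℂ] V := LinearEquiv.ofBijective f ⟨hinj, LinearMap.range_eq_top.1 hr⟩
  refine ⟨g.symm, fun v => ?_⟩
  rw [LinearEquiv.symm_apply_eq]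
  have h1 : f (g.symm v) = v := g.apply_symm_apply v
  have h2 := hS (g.symm v)
  rw [h1] at h2
  exact h2

/-- Classification of irreducible representations of `ℤ₄ᵀ`: a nonzero finite-dimensional
complex vector space `V` with a conjugate-linear map `τ` satisfying `τ⁴ = id`, which is
irreducible (the only `τ`-invariant `ℂ`-subspaces are `0` and `V`), is equivalent either
to `ℂ` with `τ` acting as complex conjugation, or to `ℂ × ℂ` with `τ` acting as `T₀`. -/
theorem irreducible_Z4T_classification
    (V : Type*) [AddCommGroup V] [Module ℂ V] [FiniteDimensional ℂ V] [Nontrivial V]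
    (τ : V →ₛₗ[starRingEnd ℂ] V) (hτ : ∀ v, τ (τ (τ (τ v))) = v)
    (hirr : ∀ W : Submodule ℂ V, (∀ v ∈ W, τ v ∈ W) → W = ⊥ ∨ W = ⊤) :
    (∃ e : V ≃ₗ[ℂ] ℂ, ∀ v, e (τ v) = (starRingEnd ℂ) (e v)) ∨
    (∃ e : V ≃ₗ[ℂ] (ℂ × ℂ), ∀ v, e (τ v) = T0 (e v)) := by
  let K : Submodule ℂ V :=
    { carrier := {v | τ (τ v) = v}
      add_mem' := by
        intro a b ha hb
        simp only [Set.mem_setOf_eq] at *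
        rw [map_add, map_add, ha, hb]
      zero_mem' := by simp
      smul_mem' := by
        intro c a ha
        simp only [Set.mem_setOf_eq] at *
        rw [τ.map_smulₛₗ, τ.map_smulₛₗ, ha, Complex.conj_conj] }
  have hK : ∀ v, v ∈ K ↔ τ (τ v) = v := fun v => Iff.rfl
  obtain ⟨v, hv⟩ := exists_ne (0 : V)
  rcases hirr K (fun v hv => by rw [hK] at *; rw [hv]) with h | h
  · right
    have hneg : τ (τ v) = -v := by
      have : τ (τ v) + v ∈ K := by
        rw [hK, map_add, map_add, hτ, add_comm]
      rw [h, Submodule.mem_bot] at this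
      exact eq_neg_of_add_eq_zero_left this
    refine equiv_of_intertwining τ hirr T0
      ((LinearMap.toSpanSingleton ℂ V v).coprod (LinearMap.toSpanSingleton ℂ V (τ v)))
      ?_ (1, 0) (by simp) ?_
    · rintro ⟨a, b⟩ hab
      simp only [LinearMap.coprod_apply, LinearMap.toSpanSingleton_apply] at hab
      have hab2 := congrArg τ hab
      rw [map_add, τ.map_smulₛₗ, τ.map_smulₛₗ, hneg, map_zero] at hab2
      have key : (a * (starRingEnd ℂ) a + b * (starRingEnd ℂ) b) • v = 0 := by
        have : (a * (starRingEnd ℂ) a + b * (starRingEnd ℂ) b) • v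
          = (starRingEnd ℂ) a • (a • v + b • τ v)
            - b • ((starRingEnd ℂ) a • τ v + (starRingEnd ℂ) b • -v) := by module
        rw [this, hab, hab2]; simp
      have key2 := (smul_eq_zero.1 key).resolve_right hv
      rw [Complex.mul_conj, Complex.mul_conj] at key2
      have key3 : Complex.normSq a + Complex.normSq b = 0 := by exact_mod_cast key2
      have ha := Complex.normSq_nonneg a
      have hb := Complex.normSq_nonneg b
      have ha0 : a = 0 := Complex.normSq_eq_zero.1 (by linarith)
      have hb0 : b = 0 := Complex.normSq_eq_zero.1 (by linarith)
      rw [ha0, hb0]; rfl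
    · rintro ⟨a, b⟩
      simp only [LinearMap.coprod_apply, LinearMap.toSpanSingleton_apply, T0,
        LinearMap.coe_mk, AddHom.coe_mk]
      rw [map_add, τ.map_smulₛₗ, τ.map_smulₛₗ, hneg]
      module
  · left
    have hpos : τ (τ v) = v := by
      rw [← hK, h]; trivial
    obtain ⟨u, hu, hτu⟩ : ∃ u : V, u ≠ 0 ∧ τ u = u := by
      by_cases hs : v + τ v = 0
      · refine ⟨Complex.I • v, smul_ne_zero Complex.I_ne_zero hv, ?_⟩
        rw [τ.map_smulₛₗ, eq_neg_of_add_eq_zero_right hs, Complex.conj_I]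
        module
      · exact ⟨v + τ v, hs, by rw [map_add, hpos, add_comm]⟩
    refine equiv_of_intertwining τ hirr (starRingEnd ℂ)
      (LinearMap.toSpanSingleton ℂ V u) ?_ 1 one_ne_zero ?_
    · intro m hm
      rw [LinearMap.toSpanSingleton_apply] at hm
      exact (smul_eq_zero.1 hm).resolve_right hu
    · intro m
      rw [LinearMap.toSpanSingleton_apply, LinearMap.toSpanSingleton_apply, τ.map_smulₛₗ, hτu]

end
end

section
/- Let A be an associative unital ℝ-algebra, φ : ℂ → A a unital ℝ-algebra homomorphism, and u ∈ A an element with u * u * u * u = -1 and φ(z) * u = u * φ(conj(z)) for all z ∈ ℂ. Assume that the ℝ-linear map ℂ × ℂ × ℂ × ℂ → A given by (z₀, z₁, z₂, z₃) ↦ φ(z₀) + φ(z₁) * u + φ(z₂) * u² + φ(z₃) * u³ is bijective. Then A is isomorphic as an ℝ-algebra to the algebra of 2 × 2 matrices over ℂ. (The paper's computation that the twisted group algebra ℂ[ℤ₄ᵀ]^ψ, whose module category defines the nontrivial ℤ₄ᵀ-SPT phase, is Mat₂(ℂ); its center is ℝ[u²] ≅ ℂ.) -/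
open ComplexConjugate in
/-- The explicit matrix model: `φ z = diag (z, conj z)`, `u = !![0, 1; I, 0]`. -/
noncomputable def z4tMat : (ℂ × ℂ × ℂ × ℂ) →ₗ[ℝ] Matrix (Fin 2) (Fin 2) ℂ where
  toFun p := !![p.1 + Complex.I * p.2.2.1, p.2.1 + Complex.I * p.2.2.2;
    Complex.I * conj p.2.1 - conj p.2.2.2, conj p.1 + Complex.I * conj p.2.2.1]
  map_add' p q := by
    ext i j
    fin_cases i <;> fin_cases j <;> simp <;> ring
  map_smul' r p := by
    ext i j
    fin_cases i <;> fin_cases j <;> simp <;> ring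

open ComplexConjugate in
/-- The product of the twisted group algebra in coordinates. -/
noncomputable def z4tMul (p q : ℂ × ℂ × ℂ × ℂ) : ℂ × ℂ × ℂ × ℂ :=
  (p.1 * q.1 - p.2.1 * conj q.2.2.2 - p.2.2.1 * q.2.2.1 - p.2.2.2 * conj q.2.1,
   p.1 * q.2.1 + p.2.1 * conj q.1 - p.2.2.1 * q.2.2.2 - p.2.2.2 * conj q.2.2.1,
   p.1 * q.2.2.1 + p.2.1 * conj q.2.1 + p.2.2.1 * q.1 - p.2.2.2 * conj q.2.2.2,
   p.1 * q.2.2.2 + p.2.1 * conj q.2.2.1 + p.2.2.1 * q.2.1 + p.2.2.2 * conj q.1)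

theorem z4tMat_mul (p q : ℂ × ℂ × ℂ × ℂ) :
    z4tMat (z4tMul p q) = z4tMat p * z4tMat q := by
  have hI : Complex.I ^ 2 = -1 := Complex.I_sq
  ext i j
  fin_cases i <;> fin_cases j <;>
    simp [z4tMat, z4tMul, Matrix.mul_apply, Fin.sum_univ_two] <;> ring_nf <;>
    simp only [hI] <;> ring

theorem z4tMat_bijective : Function.Bijective z4tMat := by
  have hI : Complex.I * Complex.I = -1 := Complex.I_mul_I
  constructor
  · rw [injective_iff_map_eq_zero]
    rintro ⟨a, b, c, d⟩ h
    have h00 := congrFun (congrFun h 0) 0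
    have h01 := congrFun (congrFun h 0) 1
    have h10 := congrFun (congrFun h 1) 0
    have h11 := congrFun (congrFun h 1) 1
    simp [z4tMat, Complex.ext_iff] at h00 h01 h10 h11
    simp only [Prod.mk_eq_zero, Complex.ext_iff, Complex.zero_re, Complex.zero_im]
    refine ⟨⟨?_, ?_⟩, ⟨?_, ?_⟩, ⟨?_, ?_⟩, ⟨?_, ?_⟩⟩ <;> linarith [h00.1, h00.2, h01.1, h01.2,
      h10.1, h10.2, h11.1, h11.2]
  · intro M
    have h2 : (starRingEnd ℂ) 2 = 2 := Complex.conj_ofNat 2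
    refine ⟨((M 0 0 + (starRingEnd ℂ) (M 1 1)) / 2,
      (M 0 1 + Complex.I * (starRingEnd ℂ) (M 1 0)) / 2,
      -Complex.I * (M 0 0 - (starRingEnd ℂ) (M 1 1)) / 2,
      -Complex.I * (M 0 1 - Complex.I * (starRingEnd ℂ) (M 1 0)) / 2), ?_⟩
    ext i j
    fin_cases i <;> fin_cases j <;> simp [z4tMat, h2] <;> ring_nf <;> simp [Complex.I_sq] <;> ring

/-- The twisted group algebra `ℂ[ℤ₄ᵀ]^ψ` is `Mat₂(ℂ)`: if `A` is an associative unital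
`ℝ`-algebra containing `ℂ` (via `φ`) and an element `u` with `u⁴ = -1` and
`φ z * u = u * φ (conj z)`, such that
`(z₀, z₁, z₂, z₃) ↦ φ z₀ + φ z₁ * u + φ z₂ * u² + φ z₃ * u³` is bijective, then `A` is
isomorphic as an `ℝ`-algebra to the `2 × 2` complex matrices. -/
theorem twisted_group_algebra_Z4T_iso_matrices
    (A : Type*) [Ring A] [Algebra ℝ A]
    (φ : ℂ →ₐ[ℝ] A) (u : A) (hu : u * u * u * u = -1)
    (hcomm : ∀ z : ℂ, φ z * u = u * φ ((starRingEnd ℂ) z))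
    (hbij : Function.Bijective (fun p : ℂ × ℂ × ℂ × ℂ =>
      φ p.1 + φ p.2.1 * u + φ p.2.2.1 * u ^ 2 + φ p.2.2.2 * u ^ 3)) :
    Nonempty (A ≃ₐ[ℝ] Matrix (Fin 2) (Fin 2) ℂ) := by
  let e : (ℂ × ℂ × ℂ × ℂ) →ₗ[ℝ] A :=
    { toFun := fun p => φ p.1 + φ p.2.1 * u + φ p.2.2.1 * u ^ 2 + φ p.2.2.2 * u ^ 3
      map_add' := fun p q => by
        simp only [Prod.fst_add, Prod.snd_add, map_add, add_mul]
        abel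
      map_smul' := fun r p => by
        simp only [Prod.smul_fst, Prod.smul_snd, map_smul, smul_mul_assoc, smul_add,
          RingHom.id_apply] }
  have he : ∀ p, e p = φ p.1 + φ p.2.1 * u + φ p.2.2.1 * u ^ 2 + φ p.2.2.2 * u ^ 3 :=
    fun _ => rfl
  have hc : ∀ z, u * φ z = φ ((starRingEnd ℂ) z) * u := fun z => by
    rw [hcomm, Complex.conj_conj]
  have hc' : ∀ z x, u * (φ z * x) = φ ((starRingEnd ℂ) z) * (u * x) := fun z x => by
    rw [← mul_assoc, hc, mul_assoc]
  have hu1 : u * (u * (u * u)) = -1 := by rw [← hu]; simp only [mul_assoc]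
  have hu2 : ∀ x, u * (u * (u * (u * x))) = -x := fun x => by
    rw [← neg_one_mul x, ← hu]; simp only [mul_assoc]
  have hmul : ∀ p q, e (z4tMul p q) = e p * e q := by
    intro p q
    simp only [he, z4tMul, pow_succ, pow_zero, one_mul, map_add, map_sub, map_mul, mul_add,
      add_mul, sub_mul, mul_assoc, hc, hc', hu1, Complex.conj_conj, mul_neg, mul_one]
    abel
  let E : (ℂ × ℂ × ℂ × ℂ) ≃ₗ[ℝ] A := LinearEquiv.ofBijective e hbij
  let F : (ℂ × ℂ × ℂ × ℂ) ≃ₗ[ℝ] Matrix (Fin 2) (Fin 2) ℂ :=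
    LinearEquiv.ofBijective z4tMat z4tMat_bijective
  have hE : ∀ p, E p = e p := fun _ => rfl
  have hF : ∀ p, F p = z4tMat p := fun _ => rfl
  refine ⟨AlgEquiv.ofLinearEquiv (E.symm.trans F) ?_ ?_⟩
  · have h1 : E (1, 0, 0, 0) = 1 := by simp [hE, he]
    rw [LinearEquiv.trans_apply, ← h1, LinearEquiv.symm_apply_apply, hF]
    ext i j
    fin_cases i <;> fin_cases j <;> simp [z4tMat]
  · intro x y
    obtain ⟨p, rfl⟩ := E.surjective x
    obtain ⟨q, rfl⟩ := E.surjective y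
    have h : E p * E q = E (z4tMul p q) := (hmul p q).symm
    rw [h]
    simp only [LinearEquiv.trans_apply, LinearEquiv.symm_apply_apply, hF, z4tMat_mul]
end

section
/- Let A be an associative unital ℝ-algebra, φ : ℂ → A a unital ℝ-algebra homomorphism, and r, t ∈ A elements satisfying: r * r * r = 1, t * t = -1, t * r = r * r * t, φ(z) * r = r * φ(z) for all z ∈ ℂ, and φ(z) * t = t * φ(conj(z)) for all z ∈ ℂ. Assume that the ℝ-linear map ℂ⁶ → A given by (z₀, …, z₅) ↦ φ(z₀) + φ(z₁) * r + φ(z₂) * r² + φ(z₃) * t + φ(z₄) * r * t + φ(z₅) * r² * t is bijective. Then A is isomorphic as an ℝ-algebra to ℍ × ℍ × ℍ. (The paper's computation that the twisted group algebra ℂ[S₃ᵀ]^ψ of the anti-linear group S₃ᵀ = ℤ₃ ⋊ ℤ₂ᵀ, which defines the nontrivial S₃ᵀ-SPT, decomposes as three copies of the quaternion algebra.) -/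
open scoped Quaternion

set_option linter.unusedSimpArgs false

/-- Gluing three copies of an algebra map along central orthogonal idempotents. -/
theorem S3T_aux_glue {A : Type*} [Ring A] [Algebra ℝ A] (ψ : ℍ[ℝ] →ₐ[ℝ] A) (e0 e1 e2 : A)
    (hs : e0 + e1 + e2 = 1) (h00 : e0 * e0 = e0) (h11 : e1 * e1 = e1) (h22 : e2 * e2 = e2)
    (h01 : e0 * e1 = 0) (h10 : e1 * e0 = 0) (h02 : e0 * e2 = 0) (h20 : e2 * e0 = 0)
    (h12 : e1 * e2 = 0) (h21 : e2 * e1 = 0)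
    (c0 : ∀ q, ψ q * e0 = e0 * ψ q) (c1 : ∀ q, ψ q * e1 = e1 * ψ q)
    (c2 : ∀ q, ψ q * e2 = e2 * ψ q) :
    ∃ F : (ℍ[ℝ] × ℍ[ℝ] × ℍ[ℝ]) →ₐ[ℝ] A,
      ∀ p, F p = e0 * ψ p.1 + e1 * ψ p.2.1 + e2 * ψ p.2.2 := by
  have key : ∀ (e f : A) (_ : ∀ q, ψ q * f = f * ψ q) (a b : ℍ[ℝ]),
      (e * ψ a) * (f * ψ b) = (e * f) * ψ (a * b) := by
    intro e f c a b
    rw [map_mul, mul_assoc, ← mul_assoc (ψ a), c, mul_assoc, mul_assoc]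
  refine ⟨AlgHom.ofLinearMap
    { toFun := fun p => e0 * ψ p.1 + e1 * ψ p.2.1 + e2 * ψ p.2.2
      map_add' := ?_
      map_smul' := ?_ } ?_ ?_, fun p => rfl⟩
  · intro p q
    simp only [Prod.fst_add, Prod.snd_add, map_add, mul_add]
    abel
  · intro c p
    simp only [Prod.smul_fst, Prod.smul_snd, map_smul, mul_smul_comm, smul_add, RingHom.id_apply]
  · simp [hs]
  · intro p q
    simp only [LinearMap.coe_mk, AddHom.coe_mk, Prod.fst_mul, Prod.snd_mul, mul_add, add_mul,
      key _ _ c0, key _ _ c1, key _ _ c2, h00, h11, h22, h01, h10, h02, h20, h12, h21]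
    simp

/-- The twisted group algebra `ℂ[S₃ᵀ]^ψ` of the anti-linear group `S₃ᵀ = ℤ₃ ⋊ ℤ₂ᵀ`
decomposes as three copies of the quaternions: if `A` is an associative unital
`ℝ`-algebra containing `ℂ` (via `φ`) and elements `r, t` with `r³ = 1`, `t² = -1`,
`t * r = r² * t`, `φ z * r = r * φ z` and `φ z * t = t * φ (conj z)`, such that
`(z₀, …, z₅) ↦ φ z₀ + φ z₁ * r + φ z₂ * r² + φ z₃ * t + φ z₄ * r * t + φ z₅ * r² * t`
is bijective, then `A ≃ₐ[ℝ] ℍ × ℍ × ℍ`. -/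
theorem twisted_group_algebra_S3T_iso
    (A : Type*) [Ring A] [Algebra ℝ A]
    (φ : ℂ →ₐ[ℝ] A) (r t : A)
    (hr : r * r * r = 1) (ht : t * t = -1) (htr : t * r = r * r * t)
    (hcr : ∀ z : ℂ, φ z * r = r * φ z)
    (hct : ∀ z : ℂ, φ z * t = t * φ ((starRingEnd ℂ) z))
    (hbij : Function.Bijective (fun z : Fin 6 → ℂ =>
      φ (z 0) + φ (z 1) * r + φ (z 2) * r ^ 2 + φ (z 3) * t +
        φ (z 4) * r * t + φ (z 5) * r ^ 2 * t)) :
    Nonempty (A ≃ₐ[ℝ] ℍ[ℝ] × ℍ[ℝ] × ℍ[ℝ]) := by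
  obtain ⟨w, s, hwdef, hw2⟩ : ∃ (w : ℂ) (s : ℝ), w = ⟨-1/2, s⟩ ∧ w * w = -1 - w := by
    refine ⟨⟨-1/2, √3/2⟩, √3/2, rfl, ?_⟩
    have h3 : √3 * √3 = 3 := Real.mul_self_sqrt (by norm_num)
    apply Complex.ext
    · simp; nlinarith
    · simp; ring
  have hwc : (starRingEnd ℂ) w = -1 - w := by
    rw [hwdef]
    apply Complex.ext
    · simp; norm_num
    · simp
  have hii : φ Complex.I * φ Complex.I = -1 := by rw [← map_mul]; simp
  have hit : φ Complex.I * t = - (t * φ Complex.I) := by rw [hct]; simp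
  let B : QuaternionAlgebra.Basis A (-1 : ℝ) 0 (-1 : ℝ) :=
    { i := φ Complex.I
      j := t
      k := φ Complex.I * t
      i_mul_i := by simp [hii]
      j_mul_j := by simp [ht]
      i_mul_j := rfl
      j_mul_i := by simp [hit] }
  let ψ : ℍ[ℝ] →ₐ[ℝ] A := B.liftHom
  have hψ : ∀ q : ℍ[ℝ], ψ q = algebraMap ℝ A q.re + q.imI • φ Complex.I + q.imJ • t
      + q.imK • (φ Complex.I * t) := fun q => rfl
  have hφ : ∀ z : ℂ, φ z = algebraMap ℝ A z.re + z.im • φ Complex.I := by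
    intro z
    conv_lhs => rw [← Complex.re_add_im z]
    rw [map_add, ← Complex.real_smul, map_smul]
    congr 1
    exact φ.commutes z.re
  have hex : ∀ z : ℂ, ∃ q : ℍ[ℝ], ψ q = φ z := by
    intro z
    refine ⟨⟨z.re, z.im, 0, 0⟩, (hψ _).trans ?_⟩
    rw [hφ z]
    simp
  choose Q hψφ using hex
  obtain ⟨qt, hψt⟩ : ∃ q : ℍ[ℝ], ψ q = t := by
    refine ⟨⟨0, 0, 1, 0⟩, (hψ _).trans ?_⟩
    simp
  obtain ⟨W, hW⟩ : ∃ W, W = φ w := ⟨_, rfl⟩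
  have hWW : W * W = -1 - W := by rw [hW, ← map_mul, hw2]; simp
  have hWW' : ∀ x, W * (W * x) = - x - W * x := by
    intro x; rw [← mul_assoc, hWW]; noncomm_ring
  have hWr : W * r = r * W := by rw [hW, hcr]
  have hWr' : ∀ x, W * (r * x) = r * (W * x) := by
    intro x; rw [← mul_assoc, hWr, mul_assoc]
  have hrrr : r * (r * r) = 1 := by rw [← mul_assoc, hr]
  have hrrr' : ∀ x, r * (r * (r * x)) = x := by
    intro x; rw [← mul_assoc, ← mul_assoc, hr, one_mul]
  have hWt : t * W = - t - W * t := by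
    have := hct ((starRingEnd ℂ) w)
    rw [Complex.conj_conj, hwc, ← hW] at this
    rw [← this, map_sub, map_neg, map_one, ← hW]; noncomm_ring
  have hWt' : ∀ x, t * (W * x) = - (t * x) - W * (t * x) := by
    intro x; rw [← mul_assoc, hWt]; noncomm_ring
  have htr0 : t * r = r * (r * t) := by rw [htr, mul_assoc]
  have htr' : ∀ x, t * (r * x) = r * (r * (t * x)) := by
    intro x; rw [← mul_assoc, htr]; noncomm_ring
  have hIr : φ Complex.I * r = r * φ Complex.I := hcr _
  have hIr' : ∀ x, φ Complex.I * (r * x) = r * (φ Complex.I * x) := by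
    intro x; rw [← mul_assoc, hIr, mul_assoc]
  have hIW : φ Complex.I * W = W * φ Complex.I := by
    rw [hW, ← map_mul, ← map_mul, mul_comm]
  -- three times the central idempotents
  obtain ⟨f0, hf0⟩ : ∃ f, f = 1 + r + r * r := ⟨_, rfl⟩
  obtain ⟨f1, hf1⟩ : ∃ f, f = 1 + r * (-1 - W) + r * (r * W) := ⟨_, rfl⟩
  obtain ⟨f2, hf2⟩ : ∃ f, f = 1 + r * W + r * (r * (-1 - W)) := ⟨_, rfl⟩
  have hsum : f0 + f1 + f2 = (3 : ℝ) • (1 : A) := by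
    rw [hf0, hf1, hf2]
    simp only [mul_sub, mul_neg, mul_one]
    module
  have m00 : f0 * f0 = (3 : ℝ) • f0 := by
    rw [hf0]; simp only [mul_add, add_mul, mul_sub, sub_mul, mul_neg, neg_mul, mul_one, one_mul, mul_assoc,
      neg_neg, neg_add, neg_sub, hWr, hWr', hWW, hWW', hrrr, hrrr']; module
  have m11 : f1 * f1 = (3 : ℝ) • f1 := by
    rw [hf1]; simp only [mul_add, add_mul, mul_sub, sub_mul, mul_neg, neg_mul, mul_one, one_mul, mul_assoc,
      neg_neg, neg_add, neg_sub, hWr, hWr', hWW, hWW', hrrr, hrrr']; module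
  have m22 : f2 * f2 = (3 : ℝ) • f2 := by
    rw [hf2]; simp only [mul_add, add_mul, mul_sub, sub_mul, mul_neg, neg_mul, mul_one, one_mul, mul_assoc,
      neg_neg, neg_add, neg_sub, hWr, hWr', hWW, hWW', hrrr, hrrr']; module
  have m01 : f0 * f1 = 0 := by
    rw [hf0, hf1]; simp only [mul_add, add_mul, mul_sub, sub_mul, mul_neg, neg_mul, mul_one, one_mul, mul_assoc,
      neg_neg, neg_add, neg_sub, hWr, hWr', hWW, hWW', hrrr, hrrr']; abel
  have m10 : f1 * f0 = 0 := by
    rw [hf0, hf1]; simp only [mul_add, add_mul, mul_sub, sub_mul, mul_neg, neg_mul, mul_one, one_mul, mul_assoc,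
      neg_neg, neg_add, neg_sub, hWr, hWr', hWW, hWW', hrrr, hrrr']; abel
  have m02 : f0 * f2 = 0 := by
    rw [hf0, hf2]; simp only [mul_add, add_mul, mul_sub, sub_mul, mul_neg, neg_mul, mul_one, one_mul, mul_assoc,
      neg_neg, neg_add, neg_sub, hWr, hWr', hWW, hWW', hrrr, hrrr']; abel
  have m20 : f2 * f0 = 0 := by
    rw [hf0, hf2]; simp only [mul_add, add_mul, mul_sub, sub_mul, mul_neg, neg_mul, mul_one, one_mul, mul_assoc,
      neg_neg, neg_add, neg_sub, hWr, hWr', hWW, hWW', hrrr, hrrr']; abel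
  have m12 : f1 * f2 = 0 := by
    rw [hf1, hf2]; simp only [mul_add, add_mul, mul_sub, sub_mul, mul_neg, neg_mul, mul_one, one_mul, mul_assoc,
      neg_neg, neg_add, neg_sub, hWr, hWr', hWW, hWW', hrrr, hrrr']; abel
  have m21 : f2 * f1 = 0 := by
    rw [hf1, hf2]; simp only [mul_add, add_mul, mul_sub, sub_mul, mul_neg, neg_mul, mul_one, one_mul, mul_assoc,
      neg_neg, neg_add, neg_sub, hWr, hWr', hWW, hWW', hrrr, hrrr']; abel
  have cc : ∀ f : A, φ Complex.I * f = f * φ Complex.I → t * f = f * t →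
      ∀ q, ψ q * ((1/3 : ℝ) • f) = ((1/3 : ℝ) • f) * ψ q := by
    intro f h1 h2 q
    have h3 : φ Complex.I * t * f = f * (φ Complex.I * t) := by
      rw [mul_assoc, h2, ← mul_assoc, h1, mul_assoc]
    rw [hψ, mul_smul_comm, smul_mul_assoc]
    congr 1
    simp only [mul_add, add_mul, smul_mul_assoc, mul_smul_comm, h1, h2, h3, Algebra.commutes]
  have i0 : φ Complex.I * f0 = f0 * φ Complex.I := by
    rw [hf0]; simp only [mul_add, add_mul, mul_sub, sub_mul, mul_neg, neg_mul, mul_one, one_mul, mul_assoc,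
      neg_neg, neg_add, neg_sub, hWr, hWr', hIr, hIr', hIW]; try abel
  have i1 : φ Complex.I * f1 = f1 * φ Complex.I := by
    rw [hf1]; simp only [mul_add, add_mul, mul_sub, sub_mul, mul_neg, neg_mul, mul_one, one_mul, mul_assoc,
      neg_neg, neg_add, neg_sub, hWr, hWr', hIr, hIr', hIW]; try abel
  have i2 : φ Complex.I * f2 = f2 * φ Complex.I := by
    rw [hf2]; simp only [mul_add, add_mul, mul_sub, sub_mul, mul_neg, neg_mul, mul_one, one_mul, mul_assoc,
      neg_neg, neg_add, neg_sub, hWr, hWr', hIr, hIr', hIW]; try abel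
  have t0 : t * f0 = f0 * t := by
    rw [hf0]; simp only [mul_add, add_mul, mul_sub, sub_mul, mul_neg, neg_mul, mul_one, one_mul, mul_assoc,
      neg_neg, neg_add, neg_sub, hWr, hWr', htr0, htr', hWt, hWt', hrrr, hrrr']; try abel
  have t1 : t * f1 = f1 * t := by
    rw [hf1]; simp only [mul_add, add_mul, mul_sub, sub_mul, mul_neg, neg_mul, mul_one, one_mul, mul_assoc,
      neg_neg, neg_add, neg_sub, hWr, hWr', htr0, htr', hWt, hWt', hrrr, hrrr']; try abel
  have t2 : t * f2 = f2 * t := by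
    rw [hf2]; simp only [mul_add, add_mul, mul_sub, sub_mul, mul_neg, neg_mul, mul_one, one_mul, mul_assoc,
      neg_neg, neg_add, neg_sub, hWr, hWr', htr0, htr', hWt, hWt', hrrr, hrrr']; try abel
  have sq : ∀ f : A, f * f = (3 : ℝ) • f →
      ((1/3 : ℝ) • f) * ((1/3 : ℝ) • f) = (1/3 : ℝ) • f := by
    intro f h
    rw [smul_mul_smul_comm, h, smul_smul]; norm_num
  have orth : ∀ f g : A, f * g = 0 → ((1/3 : ℝ) • f) * ((1/3 : ℝ) • g) = 0 := by
    intro f g h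
    rw [smul_mul_smul_comm, h, smul_zero]
  have hs1 : (1/3 : ℝ) • f0 + (1/3 : ℝ) • f1 + (1/3 : ℝ) • f2 = 1 := by
    rw [← smul_add, ← smul_add, hsum, smul_smul]; norm_num
  obtain ⟨F, hF⟩ := S3T_aux_glue ψ ((1/3 : ℝ) • f0) ((1/3 : ℝ) • f1) ((1/3 : ℝ) • f2) hs1
    (sq _ m00) (sq _ m11) (sq _ m22) (orth _ _ m01) (orth _ _ m10) (orth _ _ m02)
    (orth _ _ m20) (orth _ _ m12) (orth _ _ m21) (cc _ i0 t0) (cc _ i1 t1) (cc _ i2 t2)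
  have diag : ∀ q, F (q, q, q) = ψ q := by
    intro q
    rw [hF]
    simp only [← add_mul, hs1, one_mul]
  have rφ : ∀ z, φ z ∈ F.range := fun z => ⟨(_, _, _), (diag _).trans (hψφ z)⟩
  have rt : t ∈ F.range := ⟨(_, _, _), (diag _).trans hψt⟩
  have rr : r ∈ F.range := by
    refine ⟨(1, Q w, Q (-1 - w)), ?_⟩
    change F _ = r
    rw [hF]
    simp only [hψφ, map_sub, map_neg, map_one, ← hW]
    rw [hf0, hf1, hf2]
    simp only [smul_mul_assoc]
    simp only [mul_add, add_mul, mul_sub, sub_mul, mul_neg, neg_mul, mul_one, one_mul, mul_assoc,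
      neg_neg, neg_add, neg_sub, hWr, hWr', hWW, hWW', hrrr, hrrr']
    module
  have hFs : Function.Surjective F := by
    intro a
    obtain ⟨z, rfl⟩ := hbij.2 a
    have : (φ (z 0) + φ (z 1) * r + φ (z 2) * r ^ 2 + φ (z 3) * t +
        φ (z 4) * r * t + φ (z 5) * r ^ 2 * t) ∈ F.range := by
      have r2 := pow_mem rr 2
      exact add_mem (add_mem (add_mem (add_mem (add_mem (rφ _) (mul_mem (rφ _) rr))
        (mul_mem (rφ _) r2)) (mul_mem (rφ _) rt)) (mul_mem (mul_mem (rφ _) rr) rt))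
        (mul_mem (mul_mem (rφ _) r2) rt)
    exact this
  let L : (Fin 6 → ℂ) →ₗ[ℝ] A :=
    { toFun := fun z => φ (z 0) + φ (z 1) * r + φ (z 2) * r ^ 2 + φ (z 3) * t +
        φ (z 4) * r * t + φ (z 5) * r ^ 2 * t
      map_add' := by
        intro x y
        simp only [Pi.add_apply, map_add, add_mul]
        abel
      map_smul' := by
        intro c x
        simp only [Pi.smul_apply, map_smul, smul_mul_assoc, smul_add, RingHom.id_apply] }
  let E : (Fin 6 → ℂ) ≃ₗ[ℝ] A := LinearEquiv.ofBijective L hbij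
  have hdA : Module.finrank ℝ A = 12 := by
    rw [← E.finrank_eq, Module.finrank_pi_fintype]
    simp
  have : FiniteDimensional ℝ A := E.finiteDimensional
  have hdH : Module.finrank ℝ (ℍ[ℝ] × ℍ[ℝ] × ℍ[ℝ]) = 12 := by
    rw [Module.finrank_prod, Module.finrank_prod, Quaternion.finrank_eq_four]
  have hFi : Function.Injective F :=
    (LinearMap.injective_iff_surjective_of_finrank_eq_finrank (f := F.toLinearMap)
      (hdH.trans hdA.symm)).2 hFs
  exact ⟨(AlgEquiv.ofBijective F ⟨hFi, hFs⟩).symm⟩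
end

section
/- Let K be a group, s : K → ℤ/2 a group homomorphism, N a finite commutative group (written multiplicatively), and e₂ : K × K → N a function satisfying the 2-cocycle identity e₂(k₁, k₂) * e₂(k₁k₂, k₃) = e₂(k₂, k₃) * e₂(k₁, k₂k₃) for all k₁, k₂, k₃ ∈ K. Let N̂ denote the group of homomorphisms N → ℂˣ, let K act on N̂ by k ▷ γ = γ if s(k) = 0 and k ▷ γ = γ⁻¹ if s(k) ≠ 0, and let H = N̂ ⋊ K be the semidirect product for this action, with S : H → ℤ/2 the composition of the projection H → K with s. Then the function ω : H × H × H → ℂˣ defined by ω((γ₁, k₁), (γ₂, k₂), (γ₃, k₃)) = γ₁(e₂(k₂, k₃)) is a twisted 3-cocycle on H with respect to S. (This is the anomaly 3-cocycle in the paper's theorem that gauging a unitary central subgroup N of an anti-unitary group G^T yields the Morita-dual symmetry Vec^ω over N̂ ⋊ (G^T/N), where e₂ is the extension class of N → G^T → G^T/N.) -/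
noncomputable section

/-- Complex conjugation on the group of units `ℂˣ`. -/
def conjUnits : ℂˣ →* ℂˣ := Units.map (starRingEnd ℂ).toMonoidHom

/-- The twisted action of a group `H` on `ℂˣ` determined by a homomorphism
`S : H → ℤ/2`: elements with `S h = 0` act trivially and elements with `S h ≠ 0` act
by complex conjugation. -/
def tAct {H : Type*} [Group H] (S : H →* Multiplicative (ZMod 2)) (h : H) (z : ℂˣ) :
    ℂˣ :=
  if S h = 1 then z else conjUnits z

/-- A twisted 3-cocycle on `H` with respect to `S : H → ℤ/2`. -/
def IsTwisted3Cocycle {H : Type*} [Group H] (S : H →* Multiplicative (ZMod 2))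
    (ω : H → H → H → ℂˣ) : Prop :=
  ∀ g₁ g₂ g₃ g₄,
    tAct S g₁ (ω g₂ g₃ g₄) * ω g₁ (g₂ * g₃) g₄ * ω g₁ g₂ g₃ =
      ω (g₁ * g₂) g₃ g₄ * ω g₁ g₂ (g₃ * g₄)

variable (K N : Type*) [Group K] [CommGroup N]

/-- The action of `K` on the character group `N̂ = Hom(N, ℂˣ)` in which `k` acts
trivially if `s k = 0` and by inversion if `s k ≠ 0`. -/
def invAut (s : K →* Multiplicative (ZMod 2)) : K →* MulAut (N →* ℂˣ) where
  toFun k := if s k = 1 then 1 else MulEquiv.inv (N →* ℂˣ)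
  map_one' := by simp
  map_mul' k₁ k₂ := by
    have hmul : s (k₁ * k₂) = s k₁ * s k₂ := map_mul s k₁ k₂
    have hcases : ∀ a : Multiplicative (ZMod 2), a = 1 ∨ a = Multiplicative.ofAdd 1 := by
      decide
    have hne : (Multiplicative.ofAdd (1 : ZMod 2)) ≠ 1 := by decide
    have hprod : (Multiplicative.ofAdd (1 : ZMod 2)) * Multiplicative.ofAdd 1 = 1 := by
      decide
    have hinv : (MulEquiv.inv (N →* ℂˣ)) * (MulEquiv.inv (N →* ℂˣ)) = 1 := by
      ext γ n
      simp
    rcases hcases (s k₁) with h₁ | h₁ <;> rcases hcases (s k₂) with h₂ | h₂ <;>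
      simp [hmul, h₁, h₂, hne, hprod, hinv]

/-- **The anomaly 3-cocycle from gauging a unitary central subgroup.**  Let `K` be a
group with grading `s : K → ℤ/2`, `N` a finite commutative group, and `e₂` a 2-cocycle
of `K` valued in `N`.  On the semidirect product `H = N̂ ⋊ K` (with `K` acting on
characters by inversion via `s`), with grading `S` induced by `s`, the function
`ω((γ₁,k₁),(γ₂,k₂),(γ₃,k₃)) = γ₁(e₂(k₂,k₃))` is a twisted 3-cocycle. -/
theorem anomaly_is_twisted3Cocycle [Finite N]
    (s : K →* Multiplicative (ZMod 2)) (e₂ : K → K → N)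
    (hcocycle : ∀ k₁ k₂ k₃,
      e₂ k₁ k₂ * e₂ (k₁ * k₂) k₃ = e₂ k₂ k₃ * e₂ k₁ (k₂ * k₃)) :
    IsTwisted3Cocycle
      (s.comp (SemidirectProduct.rightHom :
        (N →* ℂˣ) ⋊[invAut K N s] K →* K))
      (fun h₁ h₂ h₃ => h₁.left (e₂ h₂.right h₃.right)) := by
  intro g₁ g₂ g₃ g₄
  have hconj : ∀ (γ : N →* ℂˣ) (n : N), conjUnits (γ n) = (γ n)⁻¹ := by
    intro γ n
    have hfin : IsOfFinOrder (γ n) := γ.isOfFinOrder (isOfFinOrder_of_finite n)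
    obtain ⟨m, hm, hpow⟩ := isOfFinOrder_iff_pow_eq_one.1 hfin
    have hnorm : ‖((γ n : ℂˣ) : ℂ)‖ = 1 := by
      apply Complex.norm_eq_one_of_pow_eq_one (n := m) _ hm.ne'
      rw [← Units.val_pow_eq_pow_val, hpow, Units.val_one]
    apply eq_inv_of_mul_eq_one_left
    ext
    change (starRingEnd ℂ) ((γ n : ℂˣ) : ℂ) * ((γ n : ℂˣ) : ℂ) = 1
    rw [Complex.conj_mul', hnorm]
    simp
  have hact : tAct (s.comp (SemidirectProduct.rightHom :
        (N →* ℂˣ) ⋊[invAut K N s] K →* K)) g₁ (g₂.left (e₂ g₃.right g₄.right)) =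
      (invAut K N s g₁.right g₂.left) (e₂ g₃.right g₄.right) := by
    by_cases h : s g₁.right = 1
    · rw [tAct, if_pos (show (s.comp (SemidirectProduct.rightHom :
        (N →* ℂˣ) ⋊[invAut K N s] K →* K)) g₁ = 1 from h)]
      simp [invAut, h]
    · rw [tAct, if_neg (show ¬ (s.comp (SemidirectProduct.rightHom :
        (N →* ℂˣ) ⋊[invAut K N s] K →* K)) g₁ = 1 from h)]
      simp [invAut, h, hconj]
  have hc := congrArg g₁.left (hcocycle g₂.right g₃.right g₄.right)
  simp only [map_mul] at hc
  simp only [SemidirectProduct.mul_left, SemidirectProduct.mul_right, MonoidHom.mul_apply]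
  rw [hact, mul_assoc, mul_comm (g₁.left (e₂ (g₂.right * g₃.right) g₄.right)), hc]
  rw [← mul_assoc, mul_comm ((invAut K N s g₁.right g₂.left) _)]

end
end

section
/- Let A be a finite commutative group, V a nonzero finite-dimensional complex vector space, ρ : A → (V ≃ₗ[ℂ] V) a group homomorphism, and T a conjugate-linear map on V with T(T(v)) = v for all v ∈ V and T ∘ ρ(a) = ρ(a) ∘ T for all a ∈ A. Assume the triple (V, ρ, T) is irreducible: the only ℂ-linear subspaces W ⊆ V with T(W) ⊆ W and ρ(a)(W) ⊆ W for all a ∈ A are 0 and V. Then dim_ℂ V ≤ 2. (This is the structural content of the paper's classification of simple objects of Rep(A × ℤ₂ᵀ): the one-dimensional real-type objects F_γ with γ² = 1 and the two-dimensional complex-type objects E_γ = γ ⊕ γ⁻¹ with γ² ≠ 1.) -/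
theorem exists_common_eigenvector_aux
    (A : Type*) [CommGroup A]
    (V : Type*) [AddCommGroup V] [Module ℂ V] [FiniteDimensional ℂ V] [Nontrivial V]
    (ρ : A →* (V ≃ₗ[ℂ] V)) :
    ∃ v : V, v ≠ 0 ∧ ∀ a, ∃ c : ℂ, ρ a v = c • v := by
  obtain ⟨W, ⟨hW0, hWρ⟩, hmin⟩ := (wellFounded_lt (α := Submodule ℂ V)).has_min
    {W | W ≠ ⊥ ∧ ∀ (a : A), ∀ v ∈ W, ρ a v ∈ W} ⟨⊤, top_ne_bot, by simp⟩
  obtain ⟨v, hvW, hv0⟩ := W.ne_bot_iff.1 hW0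
  refine ⟨v, hv0, fun a => ?_⟩
  have : Nontrivial W := (Submodule.nontrivial_iff_ne_bot).2 hW0
  obtain ⟨c, hc⟩ := Module.End.exists_eigenvalue
    (((ρ a : V ≃ₗ[ℂ] V) : V →ₗ[ℂ] V).restrict (hWρ a))
  obtain ⟨w, hw⟩ := hc.exists_hasEigenvector
  have hw1 : ρ a (w : V) = c • (w : V) := by
    have := congrArg Subtype.val hw.apply_eq_smul
    simpa using this
  have hw0 : (w : V) ≠ 0 := by
    simpa using hw.2
  refine ⟨c, ?_⟩
  let E : Submodule ℂ V := W ⊓ Module.End.eigenspace ((ρ a : V ≃ₗ[ℂ] V) : V →ₗ[ℂ] V) c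
  have hE : E = W := by
    by_contra hne
    refine hmin E ⟨?_, ?_⟩ (lt_of_le_of_ne inf_le_left hne)
    · refine (Submodule.ne_bot_iff _).2 ⟨w, ⟨w.2, ?_⟩, hw0⟩
      exact Module.End.mem_eigenspace_iff.2 hw1
    · rintro b u ⟨hu1, hu2⟩
      refine ⟨hWρ b u hu1, Module.End.mem_eigenspace_iff.2 ?_⟩
      have hu3 : ρ a u = c • u := Module.End.mem_eigenspace_iff.1 hu2
      change ρ a (ρ b u) = c • ρ b u
      rw [← map_smul, ← hu3, ← LinearEquiv.mul_apply, ← LinearEquiv.mul_apply,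
        ← map_mul, ← map_mul, mul_comm]
  have : v ∈ E := hE ▸ hvW
  exact Module.End.mem_eigenspace_iff.1 this.2

/-- An irreducible representation of `A × ℤ₂ᵀ` (a finite abelian group `A` acting
linearly, together with a commuting conjugate-linear involution `T`) on a nonzero
finite-dimensional complex vector space has complex dimension at most 2. -/
theorem irreducible_rep_A_times_Z2T_dim_le_two
    (A : Type*) [CommGroup A] [Finite A]
    (V : Type*) [AddCommGroup V] [Module ℂ V] [FiniteDimensional ℂ V] [Nontrivial V]
    (ρ : A →* (V ≃ₗ[ℂ] V))
    (T : V →ₛₗ[starRingEnd ℂ] V)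
    (hT : ∀ v, T (T v) = v)
    (hTρ : ∀ (a : A) (v : V), T (ρ a v) = ρ a (T v))
    (hirr : ∀ W : Submodule ℂ V,
      (∀ v ∈ W, T v ∈ W) → (∀ (a : A), ∀ v ∈ W, ρ a v ∈ W) → W = ⊥ ∨ W = ⊤) :
    Module.finrank ℂ V ≤ 2 := by
  obtain ⟨v, hv0, hv⟩ := exists_common_eigenvector_aux A V ρ
  have hspan := hirr (Submodule.span ℂ {v, T v}) ?_ ?_
  · rcases hspan with h | h
    · exact absurd ((Submodule.mem_bot ℂ).1
        (h ▸ Submodule.subset_span (by simp) : v ∈ (⊥ : Submodule ℂ V))) hv0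
    · classical
      rw [← finrank_top, ← h]
      have h1 := finrank_span_finset_le_card (R := ℂ) ({v, T v} : Finset V)
      have h2 := Finset.card_le_two (a := v) (b := T v)
      rw [Finset.coe_insert, Finset.coe_singleton] at h1
      exact h1.trans h2
  · intro u hu
    obtain ⟨x, y, rfl⟩ := Submodule.mem_span_pair.1 hu
    refine Submodule.mem_span_pair.2 ⟨starRingEnd ℂ y, starRingEnd ℂ x, ?_⟩
    rw [map_add, LinearMap.map_smulₛₗ, LinearMap.map_smulₛₗ, hT, add_comm]
  · intro a u hu
    obtain ⟨x, y, rfl⟩ := Submodule.mem_span_pair.1 hu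
    obtain ⟨c, hc⟩ := hv a
    refine Submodule.mem_span_pair.2 ⟨x * c, y * starRingEnd ℂ c, ?_⟩
    rw [map_add, map_smul, map_smul, ← hTρ, hc, LinearMap.map_smulₛₗ, smul_smul, smul_smul]
end

section
/- Let R : ℝ × ℝ → ℝ × ℝ be the ℝ-linear rotation by angle 2π/3, namely R(x, y) = (-(1/2)x - (√3/2)y, (√3/2)x - (1/2)y), which satisfies R ∘ R ∘ R = id. Then there exists an ℝ-linear isomorphism f : (ℝ × ℝ) ⊗[ℝ] (ℝ × ℝ) ≅ ℝ × ℝ × (ℝ × ℝ) intertwining the actions: f ∘ (R ⊗ R) = g ∘ f, where g(u, v, w) = (u, v, R(w)). (This is the fusion rule Q ⊗ Q = 2·𝟙 ⊕ Q for the nontrivial simple object Q of the ℝ-real fusion category Rep_ℝ(ℤ₃) = Rep(ℤ₃ × ℤ₂ᵀ), showing a non-invertible simple object for an abelian anti-linear group.) -/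
open TensorProduct

noncomputable section

/-- The rotation of `ℝ × ℝ` by angle `2π/3`:
`R(x, y) = (-(1/2)x - (√3/2)y, (√3/2)x - (1/2)y)`. -/
def Rrot : (ℝ × ℝ) →ₗ[ℝ] (ℝ × ℝ) where
  toFun p := (-(1 / 2) * p.1 - Real.sqrt 3 / 2 * p.2,
    Real.sqrt 3 / 2 * p.1 - 1 / 2 * p.2)
  map_add' := by
    intro a b
    simp only [Prod.fst_add, Prod.snd_add, Prod.mk_add_mk, Prod.mk.injEq]
    constructor <;> ring
  map_smul' := by
    intro c p
    simp only [Prod.smul_fst, Prod.smul_snd, Prod.smul_mk, smul_eq_mul,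
      RingHom.id_apply, Prod.mk.injEq]
    constructor <;> ring

/-- The bilinear map `(z, w) ↦ (Re z w̄, Im z w̄, conj (z w))` on `ℝ × ℝ = ℂ`. -/
def fusionBilin : (ℝ × ℝ) →ₗ[ℝ] (ℝ × ℝ) →ₗ[ℝ] (ℝ × ℝ × (ℝ × ℝ)) :=
  LinearMap.mk₂ ℝ
    (fun p q => (p.1 * q.1 + p.2 * q.2, p.2 * q.1 - p.1 * q.2,
      (p.1 * q.1 - p.2 * q.2, -(p.1 * q.2 + p.2 * q.1))))
    (by intro a b c; ext <;> simp <;> ring)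
    (by intro a b c; ext <;> simp <;> ring)
    (by intro a b c; ext <;> simp <;> ring)
    (by intro a b c; ext <;> simp <;> ring)

lemma fusionBilin_apply (p q : ℝ × ℝ) : fusionBilin p q =
    (p.1 * q.1 + p.2 * q.2, p.2 * q.1 - p.1 * q.2,
      (p.1 * q.1 - p.2 * q.2, -(p.1 * q.2 + p.2 * q.1))) := rfl

lemma Rrot_apply (p : ℝ × ℝ) : Rrot p = (-(1 / 2) * p.1 - Real.sqrt 3 / 2 * p.2,
    Real.sqrt 3 / 2 * p.1 - 1 / 2 * p.2) := rfl

lemma fusion_surjective : Function.Surjective (TensorProduct.lift fusionBilin) := by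
  rintro ⟨u, v, w, x⟩
  refine ⟨((u + w) / 2, (v - x) / 2) ⊗ₜ[ℝ] ((1 : ℝ), (0 : ℝ))
    + ((-v - x) / 2, (u - w) / 2) ⊗ₜ[ℝ] ((0 : ℝ), (1 : ℝ)), ?_⟩
  simp only [map_add, TensorProduct.lift.tmul, fusionBilin_apply]
  ext <;> simp <;> ring

lemma fusion_bijective : Function.Bijective (TensorProduct.lift fusionBilin) := by
  refine ⟨?_, fusion_surjective⟩
  rw [LinearMap.injective_iff_surjective_of_finrank_eq_finrank]
  · exact fusion_surjective
  · simp [Module.finrank_tensorProduct, Module.finrank_prod]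

/-- The fusion rule `Q ⊗ Q = 2·𝟙 ⊕ Q` for the 2-dimensional irreducible real
representation `Q = (ℝ × ℝ, R)` of `ℤ/3`: the rotation `R` by `2π/3` satisfies
`R ∘ R ∘ R = id`, and there is an `ℝ`-linear isomorphism
`(ℝ × ℝ) ⊗[ℝ] (ℝ × ℝ) ≅ ℝ × ℝ × (ℝ × ℝ)` intertwining `R ⊗ R` with
`(u, v, w) ↦ (u, v, R w)`. -/
theorem tensor_square_of_rotation_rep :
    (∀ p, Rrot (Rrot (Rrot p)) = p) ∧
    ∃ f : ((ℝ × ℝ) ⊗[ℝ] (ℝ × ℝ)) ≃ₗ[ℝ] (ℝ × ℝ × (ℝ × ℝ)),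
      ∀ t, f (TensorProduct.map Rrot Rrot t) =
        ((f t).1, (f t).2.1, Rrot (f t).2.2) := by
  have h3 : Real.sqrt 3 ^ 2 = 3 := Real.sq_sqrt (by norm_num)
  refine ⟨?_, LinearEquiv.ofBijective _ fusion_bijective, ?_⟩
  · rintro ⟨x, y⟩
    simp only [Rrot_apply, Prod.mk.injEq]
    constructor <;> grind
  · intro t
    simp only [LinearEquiv.ofBijective_apply]
    induction t using TensorProduct.induction_on with
    | zero => simp; rfl
    | add a b ha hb =>
      simp only [map_add, ha, hb, Prod.fst_add, Prod.snd_add, Prod.mk_add_mk]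
    | tmul p q =>
      simp only [TensorProduct.map_tmul, TensorProduct.lift.tmul, fusionBilin_apply, Rrot_apply,
        Prod.mk.injEq]
      refine ⟨?_, ?_, ?_, ?_⟩ <;> grind

end
end
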